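/- Let ℓ₁ = 1 and ℓ₂ = 0. If ζ : ℤ×ℤ → ℂ is symmetric and satisfies relation (R), i.e. −u·ζ(m+u, v) − v·ζ(u, m+v) + (2m + u + v)·ζ(u, v) = 0 for all m, u, v ∈ ℤ, then ζ(u, v) = u·v·ζ(1, 1) for all u, v ∈ ℤ. -/

import Mathlib

/-!
Comparing the choices `m = u` and `m = -u` shows that doubling the first argument of `ζ` doubles
its value; the relation is invariant under exchanging the arguments, so the same holds for the
second. The choice `m = v - u` makes the diagonal value `ζ v v` appear and, once doubling has
eliminated `ζ u (2 * v - u)`, leaves `v • ζ u v = u • ζ v v`; this identity and its mirror image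
reduce every value to `ζ 1 1`.
-/

/-- Relation (R) for `ℓ₁ = 1` and `ℓ₂ = 0`, the constraint that the graded Jacobi identities put on
a central extension term `ζ`. The index group `ℤ` is replaced by a commutative ring acting on the
values, and the two terms with a negative sign have been moved to the other side. -/
def JacobiRelation {R M : Type*} [CommRing R] [AddCommGroup M] [Module R M] (ζ : R → R → M) :
    Prop :=
  ∀ m u v : R, u • ζ (m + u) v + v • ζ u (m + v) = (2 * m + u + v) • ζ u v

namespace JacobiRelation

variable {R M : Type*} [CommRing R] [AddCommGroup M] [Module R M] {ζ : R → R → M}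

theorem flip (h : JacobiRelation ζ) : JacobiRelation (flip ζ) := fun m u v ↦
  calc u • ζ v (m + u) + v • ζ (m + v) u
      = v • ζ (m + v) u + u • ζ v (m + u) := add_comm _ _
    _ = (2 * m + v + u) • ζ v u := h m v u
    _ = (2 * m + u + v) • ζ v u := by rw [add_right_comm]

variable [IsDomain R] [Module.IsTorsionFree R M] [NeZero (2 : R)]

theorem zero_left (h : JacobiRelation ζ) (v : R) : ζ 0 v = 0 := by
  have zero_zero : ζ 0 0 = 0 := by
    simpa [two_ne_zero] using (h 1 0 0).symm
  obtain rfl | hv := eq_or_ne v 0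
  · exact zero_zero
  · have smul_eq : v • ζ 0 v = 0 := by
      have rel := h (-v) 0 v
      rw [neg_add_cancel, zero_zero] at rel
      linear_combination (norm := module) rel
    exact (smul_eq_zero_iff_right hv).mp smul_eq

theorem smul_apply_add_right (h : JacobiRelation ζ) (u v : R) :
    v • ζ u (v + u) = (v + u) • ζ u v := by
  have rel := h (-u) u (v + u)
  rw [neg_add_cancel, h.zero_left, neg_add_cancel_comm_assoc] at rel
  linear_combination (norm := module) -rel

theorem two_mul_left (h : JacobiRelation ζ) (u v : R) : ζ (2 * u) v = (2 : R) • ζ u v := by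
  obtain rfl | hu := eq_or_ne u 0
  · simp [h.zero_left]
  · have rel := h u u v
    rw [← two_mul, add_comm u v] at rel
    apply smul_right_injective M hu
    linear_combination (norm := module) rel - h.smul_apply_add_right u v

theorem two_mul_right (h : JacobiRelation ζ) (u v : R) : ζ u (2 * v) = (2 : R) • ζ u v :=
  h.flip.two_mul_left v u

theorem smul_eq_smul_diag_right (h : JacobiRelation ζ) (u v : R) :
    v • ζ u v = u • ζ v v := by
  have reflect : v • ζ u (2 * v - u) = (2 * v - u) • ζ u v := by
    have shift := h.smul_apply_add_right u (2 * v - u)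
    rw [sub_add_cancel, h.two_mul_right] at shift
    apply smul_right_injective M (two_ne_zero : (2 : R) ≠ 0)
    linear_combination (norm := module) -shift
  have rel := h (v - u) u v
  rw [sub_add_cancel, show v - u + v = 2 * v - u by ring] at rel
  linear_combination (norm := module) reflect - rel

theorem smul_eq_smul_diag_left (h : JacobiRelation ζ) (u v : R) :
    u • ζ u v = v • ζ u u :=
  h.flip.smul_eq_smul_diag_right v u

end JacobiRelation

theorem zeta_sym_ell_one_zero_general {R M : Type*} [CommRing R] [IsDomain R] [NeZero (2 : R)]
    [AddCommGroup M] [Module R M] [Module.IsTorsionFree R M] {ζ : R → R → M}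
    (h : JacobiRelation ζ) (u v : R) : ζ u v = (u * v) • ζ 1 1 := by
  obtain rfl | hv := eq_or_ne v 0
  · simpa [flip] using h.flip.zero_left u
  · have one_left : ζ 1 v = v • ζ 1 1 := by
      simpa only [one_smul] using h.smul_eq_smul_diag_left 1 v
    have diag : ζ v v = v • ζ 1 v := by
      simpa only [one_smul] using (h.smul_eq_smul_diag_right 1 v).symm
    apply smul_right_injective M hv
    calc v • ζ u v = u • ζ v v := h.smul_eq_smul_diag_right u v
      _ = u • v • v • ζ 1 1 := by rw [diag, one_left]
      _ = v • (u * v) • ζ 1 1 := by module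

/-- Let `ℓ₁ = 1` and `ℓ₂ = 0`. If `ζ : ℤ×ℤ → ℂ` is symmetric and
satisfies `−u·ζ(m+u, v) − v·ζ(u, m+v) + (2m + u + v)·ζ(u, v) = 0` for all `m, u, v ∈ ℤ`,
then `ζ(u, v) = u·v·ζ(1, 1)` for all `u, v ∈ ℤ`. -/
theorem zeta_sym_ell_one_zero (ζ : ℤ → ℤ → ℂ)
    (hsym : ∀ u v : ℤ, ζ u v = ζ v u)
    (hR : ∀ m u v : ℤ,
      -(u : ℂ) * ζ (m + u) v - (v : ℂ) * ζ u (m + v)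
      + (2 * (m : ℂ) + (u : ℂ) + (v : ℂ)) * ζ u v = 0) :
    ∀ u v : ℤ, ζ u v = (u : ℂ) * (v : ℂ) * ζ 1 1 := by
  have h : JacobiRelation ζ := fun m u v ↦ by
    simp only [zsmul_eq_mul]
    push_cast
    linear_combination -hR m u v
  simpa using zeta_sym_ell_one_zero_general h
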